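/- For every α > 0 there exist constants c_α, C_α > 0, depending only on α, such that for all t > 0 and all ξ, η ∈ ℝ³: c_α t (1 + |ξ|² + t²|η|²)^{α/2} ≤ ∫₀^t ⟨ξ − sη⟩^α ds ≤ C_α t (1 + |ξ|² + t²|η|²)^{α/2}. -/

import Mathlib

open MeasureTheory

/-! Upper bound: `‖ξ - s • η‖ ≤ ‖ξ‖ + t * ‖η‖` holds pointwise for `0 ≤ s ≤ t`.

Lower bound: the integrand may be small near one value of `s`, but not at both `s` and `s + t / 2`:
these two points of the line differ by `(t / 2) • η`, so the larger of the two brackets controls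
`t * ‖η‖`, and with it `‖ξ‖`. Hence the sum of the integrand at `s` and `s + t / 2` has the right
size for every `s ∈ [0, t / 2]`, and integrating over this half-interval gives the whole
integral. -/

open Set

theorem mul_le_integral_of_le_add_shift {f : ℝ → ℝ} {a h m : ℝ} (hh : 0 ≤ h)
    (hf : IntervalIntegrable f volume a (a + h))
    (hf' : IntervalIntegrable f volume (a + h) (a + h + h))
    (hm : ∀ s ∈ Icc a (a + h), m ≤ f s + f (s + h)) :
    h * m ≤ ∫ s in a..(a + h + h), f s := by
  have hshift : IntervalIntegrable (fun s ↦ f (s + h)) volume a (a + h) := by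
    simpa only [add_sub_cancel_right] using hf'.comp_add_right h
  calc h * m = ∫ _ in a..(a + h), m := by
        rw [intervalIntegral.integral_const, add_sub_cancel_left, smul_eq_mul]
    _ ≤ ∫ s in a..(a + h), (f s + f (s + h)) :=
        intervalIntegral.integral_mono_on (le_add_of_nonneg_right hh) intervalIntegrable_const
          (hf.add hshift) hm
    _ = (∫ s in a..(a + h), f s) + ∫ s in (a + h)..(a + h + h), f s := by
        rw [intervalIntegral.integral_add hf hshift, intervalIntegral.integral_comp_add_right f h]
    _ = ∫ s in a..(a + h + h), f s := intervalIntegral.integral_add_adjacent_intervals hf hf'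

theorem max_rpow_le_add_rpow {x y : ℝ} (hx : 0 ≤ x) (hy : 0 ≤ y) (p : ℝ) :
    max x y ^ p ≤ x ^ p + y ^ p := by
  rcases max_choice x y with h | h <;> rw [h]
  · exact le_add_of_nonneg_right (Real.rpow_nonneg hy p)
  · exact le_add_of_nonneg_left (Real.rpow_nonneg hx p)

section JapaneseBracket

variable {E : Type*} [SeminormedAddCommGroup E]

/-- The Japanese bracket `⟨v⟩ = (1 + ‖v‖²)^{1/2}`, the inhomogeneous weight whose moments along a
line are estimated here. It is written as a square root rather than a real power. -/
noncomputable def japaneseBracket (v : E) : ℝ := √(1 + ‖v‖ ^ 2)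

theorem japaneseBracket_nonneg (v : E) : 0 ≤ japaneseBracket v := Real.sqrt_nonneg _

theorem japaneseBracket_sq (v : E) : japaneseBracket v ^ 2 = 1 + ‖v‖ ^ 2 :=
  Real.sq_sqrt (by positivity)

theorem continuous_japaneseBracket : Continuous (japaneseBracket : E → ℝ) := by
  unfold japaneseBracket
  fun_prop

variable [NormedSpace ℝ E] {s t α : ℝ}

theorem norm_smul_le_norm_sub_smul_add (ξ η : E) (s h : ℝ) :
    ‖h • η‖ ≤ ‖ξ - s • η‖ + ‖ξ - (s + h) • η‖ := by
  have hsub : h • η = (ξ - s • η) - (ξ - (s + h) • η) := by rw [add_smul]; abel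
  exact hsub ▸ norm_sub_le _ _

theorem norm_smul_le_mul_norm_of_mem_Icc (η : E) (hs : s ∈ Icc 0 t) : ‖s • η‖ ≤ t * ‖η‖ := by
  rw [norm_smul, Real.norm_of_nonneg hs.1]
  gcongr
  exact hs.2

theorem japaneseBracket_sub_smul_le (ξ η : E) (hs : s ∈ Icc 0 t) :
    japaneseBracket (ξ - s • η) ≤ √2 * √(1 + ‖ξ‖ ^ 2 + t ^ 2 * ‖η‖ ^ 2) := by
  have hnorm : ‖ξ - s • η‖ ≤ ‖ξ‖ + t * ‖η‖ :=
    (norm_sub_le _ _).trans (by gcongr; exact norm_smul_le_mul_norm_of_mem_Icc η hs)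
  rw [← Real.sqrt_mul zero_le_two]
  apply Real.sqrt_le_sqrt
  calc 1 + ‖ξ - s • η‖ ^ 2 ≤ 1 + (‖ξ‖ + t * ‖η‖) ^ 2 := by gcongr
    _ ≤ 1 + 2 * (‖ξ‖ ^ 2 + (t * ‖η‖) ^ 2) := by gcongr; exact add_sq_le
    _ ≤ 2 * (1 + ‖ξ‖ ^ 2 + t ^ 2 * ‖η‖ ^ 2) := by linarith [mul_pow t ‖η‖ 2]

theorem one_add_norm_sq_add_le_japaneseBracket_sq (ξ η : E) (hs : s ∈ Icc 0 (t / 2)) :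
    1 + ‖ξ‖ ^ 2 + t ^ 2 * ‖η‖ ^ 2 ≤
      14 * japaneseBracket (ξ - s • η) ^ 2 + 11 * japaneseBracket (ξ - (s + t / 2) • η) ^ 2 := by
  set x := ‖ξ - s • η‖
  set y := ‖ξ - (s + t / 2) • η‖
  have ht : 0 ≤ t / 2 := hs.1.trans hs.2
  have hη : t / 2 * ‖η‖ ≤ x + y := by
    simpa only [norm_smul, Real.norm_of_nonneg ht]
      using norm_smul_le_norm_sub_smul_add ξ η s (t / 2)
  have hξ : ‖ξ‖ ≤ x + (x + y) :=
    calc ‖ξ‖ ≤ ‖ξ - s • η‖ + ‖s • η‖ := norm_le_norm_sub_add _ _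
      _ ≤ x + (x + y) := by gcongr; exact (norm_smul_le_mul_norm_of_mem_Icc η hs).trans hη
  calc 1 + ‖ξ‖ ^ 2 + t ^ 2 * ‖η‖ ^ 2 = 1 + ‖ξ‖ ^ 2 + 4 * (t / 2 * ‖η‖) ^ 2 := by ring
    _ ≤ 1 + (x + (x + y)) ^ 2 + 4 * (x + y) ^ 2 := by gcongr
    _ ≤ 14 * (1 + x ^ 2) + 11 * (1 + y ^ 2) := by nlinarith only [sq_nonneg (x - y)]
    _ = _ := by rw [japaneseBracket_sq, japaneseBracket_sq]

theorem sqrt_le_five_mul_max_japaneseBracket (ξ η : E) (hs : s ∈ Icc 0 (t / 2)) :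
    √(1 + ‖ξ‖ ^ 2 + t ^ 2 * ‖η‖ ^ 2) ≤
      5 * max (japaneseBracket (ξ - s • η)) (japaneseBracket (ξ - (s + t / 2) • η)) := by
  have hsq := one_add_norm_sq_add_le_japaneseBracket_sq ξ η hs
  set v := japaneseBracket (ξ - s • η)
  set w := japaneseBracket (ξ - (s + t / 2) • η)
  have hv : 0 ≤ v := japaneseBracket_nonneg _
  have hw : 0 ≤ w := japaneseBracket_nonneg _
  refine Real.sqrt_le_iff.2 ⟨by positivity, ?_⟩
  calc 1 + ‖ξ‖ ^ 2 + t ^ 2 * ‖η‖ ^ 2 ≤ 14 * v ^ 2 + 11 * w ^ 2 := hsq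
    _ ≤ 14 * max v w ^ 2 + 11 * max v w ^ 2 := by
        gcongr
        exacts [le_max_left v w, le_max_right v w]
    _ = (5 * max v w) ^ 2 := by ring

theorem intervalIntegrable_japaneseBracket_rpow (hα : 0 ≤ α) (ξ η : E) (a b : ℝ) :
    IntervalIntegrable (fun s : ℝ ↦ japaneseBracket (ξ - s • η) ^ α) volume a b :=
  Continuous.intervalIntegrable
    ((continuous_japaneseBracket.comp (by fun_prop)).rpow_const fun _ ↦ Or.inr hα) a b

theorem integral_japaneseBracket_rpow_le (hα : 0 ≤ α) (ht : 0 ≤ t) (ξ η : E) :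
    ∫ s in (0 : ℝ)..t, japaneseBracket (ξ - s • η) ^ α ≤
      √2 ^ α * t * (1 + ‖ξ‖ ^ 2 + t ^ 2 * ‖η‖ ^ 2) ^ (α / 2) := by
  rw [Real.rpow_div_two_eq_sqrt α (by positivity)]
  set T := √(1 + ‖ξ‖ ^ 2 + t ^ 2 * ‖η‖ ^ 2)
  calc ∫ s in (0 : ℝ)..t, japaneseBracket (ξ - s • η) ^ α
      ≤ ∫ _ in (0 : ℝ)..t, (√2 * T) ^ α :=
        intervalIntegral.integral_mono_on ht (intervalIntegrable_japaneseBracket_rpow hα ξ η 0 t)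
          intervalIntegrable_const fun s hs ↦
            Real.rpow_le_rpow (japaneseBracket_nonneg _) (japaneseBracket_sub_smul_le ξ η hs) hα
    _ = √2 ^ α * t * T ^ α := by
        rw [intervalIntegral.integral_const, sub_zero, smul_eq_mul,
          Real.mul_rpow (Real.sqrt_nonneg _) (Real.sqrt_nonneg _)]
        ring

theorem le_integral_japaneseBracket_rpow (hα : 0 ≤ α) (ht : 0 ≤ t) (ξ η : E) :
    (1 / 5) ^ α / 2 * t * (1 + ‖ξ‖ ^ 2 + t ^ 2 * ‖η‖ ^ 2) ^ (α / 2) ≤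
      ∫ s in (0 : ℝ)..t, japaneseBracket (ξ - s • η) ^ α := by
  rw [Real.rpow_div_two_eq_sqrt α (by positivity)]
  set T := √(1 + ‖ξ‖ ^ 2 + t ^ 2 * ‖η‖ ^ 2)
  have hpair : ∀ s ∈ Icc 0 (0 + t / 2), (1 / 5 * T) ^ α ≤
      japaneseBracket (ξ - s • η) ^ α + japaneseBracket (ξ - (s + t / 2) • η) ^ α := by
    intro s hs
    rw [zero_add] at hs
    have hmax : T ≤ 5 * max (japaneseBracket (ξ - s • η))
        (japaneseBracket (ξ - (s + t / 2) • η)) :=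
      sqrt_le_five_mul_max_japaneseBracket ξ η hs
    exact (Real.rpow_le_rpow (by positivity) (by linarith) hα).trans
      (max_rpow_le_add_rpow (japaneseBracket_nonneg _) (japaneseBracket_nonneg _) α)
  calc (1 / 5) ^ α / 2 * t * T ^ α = t / 2 * (1 / 5 * T) ^ α := by
        rw [Real.mul_rpow (by norm_num) (Real.sqrt_nonneg _)]
        ring
    _ ≤ ∫ s in (0 : ℝ)..(0 + t / 2 + t / 2), japaneseBracket (ξ - s • η) ^ α :=
        mul_le_integral_of_le_add_shift (by positivity)
          (intervalIntegrable_japaneseBracket_rpow hα ξ η _ _)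
          (intervalIntegrable_japaneseBracket_rpow hα ξ η _ _) hpair
    _ = ∫ s in (0 : ℝ)..t, japaneseBracket (ξ - s • η) ^ α := by rw [zero_add, add_halves]

theorem stmt6_general (hα : 0 ≤ α) (ht : 0 ≤ t) (ξ η : E) :
    (1 / 5) ^ α / 2 * t * (1 + ‖ξ‖ ^ 2 + t ^ 2 * ‖η‖ ^ 2) ^ (α / 2) ≤
        ∫ s in (0 : ℝ)..t, japaneseBracket (ξ - s • η) ^ α ∧
      ∫ s in (0 : ℝ)..t, japaneseBracket (ξ - s • η) ^ α ≤
        √2 ^ α * t * (1 + ‖ξ‖ ^ 2 + t ^ 2 * ‖η‖ ^ 2) ^ (α / 2) :=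
  ⟨le_integral_japaneseBracket_rpow hα ht ξ η, integral_japaneseBracket_rpow_le hα ht ξ η⟩

end JapaneseBracket

theorem stmt6 (α : ℝ) (hα : 0 < α) :
    ∃ c C : ℝ, 0 < c ∧ 0 < C ∧ ∀ t : ℝ, 0 < t → ∀ ξ η : EuclideanSpace ℝ (Fin 3),
      c * t * (1 + ‖ξ‖ ^ 2 + t ^ 2 * ‖η‖ ^ 2) ^ (α / 2)
          ≤ (∫ s in (0 : ℝ)..t, Real.sqrt (1 + ‖ξ - s • η‖ ^ 2) ^ α) ∧
        (∫ s in (0 : ℝ)..t, Real.sqrt (1 + ‖ξ - s • η‖ ^ 2) ^ α)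
          ≤ C * t * (1 + ‖ξ‖ ^ 2 + t ^ 2 * ‖η‖ ^ 2) ^ (α / 2) :=
  ⟨(1 / 5) ^ α / 2, √2 ^ α, by positivity, by positivity,
    fun _ ht ξ η ↦ stmt6_general hα.le ht.le ξ η⟩
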